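/- arXiv:1908.02829 — 3 statements merged into one kernel-verified Lean document; each statement's English description precedes it below -/
import Mathlib

section
/- Consider the toric code: Kitaev's model for G = ℤ₂ on an L×L periodic square lattice on the torus, with ground space projector P = ∏_{v∈V} (1+X_v)/2 · ∏_{p∈F} (1+Z_p)/2. Let k ≤ ⌊(L−1)/2⌋ and let 𝓔(k) be the set of all tensor products of Pauli operators X, Y, Z acting on at most k edges. Then for all E_i, E_j ∈ 𝓔(k), either P E_i† E_j P = 0 or E_i† E_j acts on the ground space as a scalar multiple of the identity; hence P E_i† E_j P = α_{ij} P for a Hermitian matrix (α_{ij}), and the Knill–Laflamme condition holds, so the toric code corrects all errors on at most ⌊(L−1)/2⌋ qubits. -/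
/-!
Kitaev's quantum double model, formalized on the concrete `L × L` periodic square
lattice on the torus (the setting of Bravyi–Hastings–Michalakis TQO conditions used
in the paper).  Vertices are `ZMod L × ZMod L`; an oriented edge is a pair
`(v, d)` of its base vertex `v` and a direction `d : Bool` (`false` = rightward,
`true` = upward).  Each edge carries `ℂ[G]`, so the total Hilbert space is
`(Edge L → G) → ℂ` with the "group basis" given by delta functions.
"Contained in a contractible subregion" is rendered as the rectangle having side
lengths `< L`, i.e. not wrapping around the torus.
-/

open scoped BigOperators Classical

noncomputable section

namespace QDM

/-- Vertices of the `L × L` periodic square lattice on the torus. -/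
abbrev Vtx (L : ℕ) := ZMod L × ZMod L

/-- Oriented edges: base vertex together with a direction
(`false` = rightward, `true` = upward). -/
abbrev Edge (L : ℕ) := (ZMod L × ZMod L) × Bool

/-- Source vertex of an edge. -/
def src {L : ℕ} (e : Edge L) : Vtx L := e.1

/-- Target vertex of an edge. -/
def tgt {L : ℕ} (e : Edge L) : Vtx L := if e.2 then e.1 + (0, 1) else e.1 + (1, 0)

/-- A step of a path: an edge together with a direction of traversal
(`true` = along the orientation of the edge, `false` = against it). -/
abbrev Step (L : ℕ) := Edge L × Bool

/-- Initial vertex of a step. -/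
def stepStart {L : ℕ} (s : Step L) : Vtx L := if s.2 then src s.1 else tgt s.1

/-- Final vertex of a step. -/
def stepEnd {L : ℕ} (s : Step L) : Vtx L := if s.2 then tgt s.1 else src s.1

/-- A (nonempty) closed loop: consecutive steps are linked and the last step ends
where the first begins. -/
def IsLoop {L : ℕ} (γ : List (Step L)) : Prop :=
  γ ≠ [] ∧ γ.Chain' (fun a b => stepEnd a = stepStart b) ∧
    ∀ a ∈ γ.head?, ∀ b ∈ γ.getLast?, stepEnd b = stepStart a

/-- A (possibly empty) closed loop based at `v₀`. -/
def IsLoopAt {L : ℕ} (v₀ : Vtx L) (γ : List (Step L)) : Prop :=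
  γ.Chain' (fun a b => stepEnd a = stepStart b) ∧
    (∀ a ∈ γ.head?, stepStart a = v₀) ∧ ∀ b ∈ γ.getLast?, stepEnd b = v₀

/-- A classical field configuration: one group element per edge.  The group-basis
state `|g⟩` of the paper corresponds to the delta function `deltaF g`. -/
abbrev Config (G : Type) (L : ℕ) := Edge L → G

/-- Holonomy of a configuration along a path: the ordered product of the edge
elements, inverting the elements on edges traversed against their orientation. -/
def hol {G : Type} [Group G] {L : ℕ} (x : Config G L) (γ : List (Step L)) : G :=
  (γ.map fun s => if s.2 then x s.1 else (x s.1)⁻¹).prod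

/-- The counterclockwise boundary loop of the plaquette whose lower-left corner
is `p`. -/
def plaqBoundary {L : ℕ} (p : Vtx L) : List (Step L) :=
  [((p, false), true), ((p + (1, 0), true), true),
   ((p + (0, 1), false), false), ((p, true), false)]

/-- Action on configurations of the local gauge transformation `A_v(h)`:
left multiplication by `h` on edges oriented away from `v`, right multiplication
by `h⁻¹` on edges oriented towards `v`. -/
def gaugeOne {G : Type} [Group G] {L : ℕ} (v : Vtx L) (h : G) (x : Config G L) :
    Config G L :=
  fun e => (if src e = v then h else 1) * x e * (if tgt e = v then h⁻¹ else 1)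

/-- Action on configurations of the product of the gauge transformations
`A_v(f v)` over all vertices `v`. -/
def gaugeAll {G : Type} [Group G] {L : ℕ} (f : Vtx L → G) (x : Config G L) :
    Config G L :=
  fun e => f (src e) * x e * (f (tgt e))⁻¹

/-! ### Hilbert space and operators -/

/-- The total Hilbert space `⊗_{e ∈ E} ℂ[G]`, realized as functions on the set of
group-basis labels. -/
abbrev H (G : Type) (L : ℕ) := Config G L → ℂ

/-- The standard inner product (antilinear in the first slot) on a finite
function space. -/
def finner {α : Type} [Fintype α] (ψ φ : α → ℂ) : ℂ :=
  ∑ x : α, (starRingEnd ℂ) (ψ x) * φ x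

/-- The basis state `|y⟩` as a delta function. -/
def deltaF {α : Type} (y : α) : α → ℂ := fun x => if x = y then 1 else 0

/-- Diagonal (in the given basis) operator with diagonal entries `c`. -/
def diagOpF {α : Type} (c : α → ℂ) : (α → ℂ) →ₗ[ℂ] (α → ℂ) where
  toFun ψ := fun x => c x * ψ x
  map_add' ψ φ := by funext x; simp [mul_add]
  map_smul' r ψ := by
    funext x
    simp only [Pi.smul_apply, smul_eq_mul, RingHom.id_apply]
    ring

/-- The adjoint of an operator with respect to the standard inner product. -/
noncomputable def adjOp {α : Type} [Fintype α] (O : (α → ℂ) →ₗ[ℂ] (α → ℂ)) :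
    (α → ℂ) →ₗ[ℂ] (α → ℂ) :=
  Matrix.toLin' (Matrix.conjTranspose (LinearMap.toMatrix' O))

/-- `P` is the orthogonal projector onto the subspace `W` (with respect to the
standard inner product): idempotent, self-adjoint, with range `W`. -/
def IsOrthProjOnto {α : Type} [Fintype α] (P : (α → ℂ) →ₗ[ℂ] (α → ℂ))
    (W : Submodule ℂ (α → ℂ)) : Prop :=
  P ∘ₗ P = P ∧ LinearMap.range P = W ∧ ∀ ψ φ, finner (P ψ) φ = finner ψ (P φ)

/-- The gauge transformation operator `A_v(h)` (a permutation of the group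
basis). -/
def Avg (G : Type) [Group G] (L : ℕ) (v : Vtx L) (h : G) : H G L →ₗ[ℂ] H G L :=
  LinearMap.funLeft ℂ ℂ (gaugeOne v h⁻¹)

/-- The vertex projector `A_v = (1/|G|) ∑_h A_v(h)`. -/
noncomputable def Av (G : Type) [Group G] [Fintype G] (L : ℕ) (v : Vtx L) :
    H G L →ₗ[ℂ] H G L :=
  (Fintype.card G : ℂ)⁻¹ • ∑ h : G, Avg G L v h

/-- The plaquette projector `B_p`, projecting onto group-basis states whose
holonomy counterclockwise around the plaquette `p` is trivial. -/
def Bp (G : Type) [Group G] (L : ℕ) (p : Vtx L) : H G L →ₗ[ℂ] H G L :=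
  diagOpF fun x => if hol x (plaqBoundary p) = 1 then 1 else 0

/-- The ground space `V_gs` of Kitaev's quantum double model:
common fixed space of all `A_v` and all `B_p`. -/
def groundSpace (G : Type) [Group G] [Fintype G] (L : ℕ) : Submodule ℂ (H G L) :=
  (⨅ v : Vtx L, LinearMap.ker (Av G L v - LinearMap.id)) ⊓
    ⨅ p : Vtx L, LinearMap.ker (Bp G L p - LinearMap.id)

/-- The gauge-invariant (physical) subspace: common fixed space of all `A_v`. -/
def Hgauge (G : Type) [Group G] [Fintype G] (L : ℕ) : Submodule ℂ (H G L) :=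
  ⨅ v : Vtx L, LinearMap.ker (Av G L v - LinearMap.id)

/-! ### Rectangular sublattices -/

/-- The edges of the `w × h` rectangular sublattice with lower-left corner `c`
(including the edges on its boundary). -/
def rectEdges (L : ℕ) (c : Vtx L) (w h : ℕ) : Set (Edge L) :=
  { e | ∃ i j : ℕ, e.1 = c + ((i : ZMod L), (j : ZMod L)) ∧
      if e.2 then i ≤ w ∧ j < h else i < w ∧ j ≤ h }

/-- The vertices of the rectangular sublattice. -/
def rectVtx (L : ℕ) (c : Vtx L) (w h : ℕ) : Set (Vtx L) :=
  { v | ∃ i j : ℕ, i ≤ w ∧ j ≤ h ∧ v = c + ((i : ZMod L), (j : ZMod L)) }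

/-- The interior vertices of the rectangular sublattice. -/
def rectIntVtx (L : ℕ) (c : Vtx L) (w h : ℕ) : Set (Vtx L) :=
  { v | ∃ i j : ℕ, 0 < i ∧ i < w ∧ 0 < j ∧ j < h ∧
      v = c + ((i : ZMod L), (j : ZMod L)) }

/-- The boundary vertices of the rectangular sublattice. -/
def rectBdryVtx (L : ℕ) (c : Vtx L) (w h : ℕ) : Set (Vtx L) :=
  { v | ∃ i j : ℕ, i ≤ w ∧ j ≤ h ∧ (i = 0 ∨ i = w ∨ j = 0 ∨ j = h) ∧
      v = c + ((i : ZMod L), (j : ZMod L)) }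

/-- The plaquettes of the rectangular sublattice (labelled by their lower-left
corners). -/
def rectPlaqs (L : ℕ) (c : Vtx L) (w h : ℕ) : Set (Vtx L) :=
  { p | ∃ i j : ℕ, i < w ∧ j < h ∧ p = c + ((i : ZMod L), (j : ZMod L)) }

/-- The boundary edges of the rectangular sublattice. -/
def rectBdryEdges (L : ℕ) (c : Vtx L) (w h : ℕ) : Set (Edge L) :=
  { e | ∃ i j : ℕ, e.1 = c + ((i : ZMod L), (j : ZMod L)) ∧
      if e.2 then (i = 0 ∨ i = w) ∧ j < h else i < w ∧ (j = 0 ∨ j = h) }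

/-! ### Reduced states and local operators -/

/-- Combine a configuration on the edges in `A` with one on the complementary
edges. -/
def merge {S : Type} {L : ℕ} (A : Set (Edge L)) (a : {e : Edge L // e ∈ A} → S)
    (b : {e : Edge L // e ∉ A} → S) : Edge L → S :=
  fun e => if h : e ∈ A then a ⟨e, h⟩ else b ⟨e, h⟩

/-- The reduced density matrix `Tr_{Ā} |ψ⟩⟨ψ|` of a state `ψ` on the edges in
`A`. -/
noncomputable def rho {S : Type} [Fintype S] {L : ℕ} [NeZero L] (A : Set (Edge L))
    (ψ : (Edge L → S) → ℂ) :
    Matrix ({e : Edge L // e ∈ A} → S) ({e : Edge L // e ∈ A} → S) ℂ :=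
  Matrix.of fun a a' => ∑ b : {e : Edge L // e ∉ A} → S,
    ψ (merge A a b) * (starRingEnd ℂ) (ψ (merge A a' b))

/-- The partial trace over the complement of `A` of an operator. -/
noncomputable def ptraceOp {S : Type} [Fintype S] {L : ℕ} [NeZero L]
    (A : Set (Edge L)) (O : ((Edge L → S) → ℂ) →ₗ[ℂ] ((Edge L → S) → ℂ)) :
    Matrix ({e : Edge L // e ∈ A} → S) ({e : Edge L // e ∈ A} → S) ℂ :=
  Matrix.of fun a a' => ∑ b : {e : Edge L // e ∉ A} → S,
    O (deltaF (merge A a' b)) (merge A a b)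

/-- An operator is supported on the edges in `A` if its matrix in the product
basis has the form `M ⊗ 𝟙`. -/
def SupportedOn {S : Type} {L : ℕ} (A : Set (Edge L))
    (O : ((Edge L → S) → ℂ) →ₗ[ℂ] ((Edge L → S) → ℂ)) : Prop :=
  ∃ M : Matrix ({e : Edge L // e ∈ A} → S) ({e : Edge L // e ∈ A} → S) ℂ,
    ∀ (a a' : {e : Edge L // e ∈ A} → S) (b b' : {e : Edge L // e ∉ A} → S),
      O (deltaF (merge A a' b')) (merge A a b) = if b = b' then M a a' else 0

end QDM

namespace QDM

/-! ### The toric code: `G = ℤ₂` on the `L × L` periodic square lattice -/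

/-- A product of Pauli `X` operators, one on each edge where `a` is `1`. -/
def PX (L : ℕ) (a : Edge L → ZMod 2) :
    ((Edge L → ZMod 2) → ℂ) →ₗ[ℂ] ((Edge L → ZMod 2) → ℂ) :=
  LinearMap.funLeft ℂ ℂ fun x => x + a

/-- A product of Pauli `Z` operators, one on each edge where `b` is `1`. -/
def PZ (L : ℕ) [NeZero L] (b : Edge L → ZMod 2) :
    ((Edge L → ZMod 2) → ℂ) →ₗ[ℂ] ((Edge L → ZMod 2) → ℂ) :=
  diagOpF fun x => (-1 : ℂ) ^ (∑ e : Edge L, (b e * x e).val)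

/-- Indicator of the edges incident to the vertex `v` (the star of `v`), so that
`PX (vStar v)` is the toric code vertex operator `X_v`. -/
def vStar (L : ℕ) (v : Vtx L) : Edge L → ZMod 2 :=
  fun e => if src e = v ∨ tgt e = v then 1 else 0

/-- Indicator of the boundary edges of the plaquette `p`, so that
`PZ (pStar p)` is the toric code plaquette operator `Z_p`. -/
def pStar (L : ℕ) (p : Vtx L) : Edge L → ZMod 2 :=
  fun e => if e = (p, false) ∨ e = (p, true) ∨ e = (p + (1, 0), true) ∨
      e = (p + (0, 1), false) then 1 else 0

/-- The toric code ground space: the common `+1` eigenspace of all vertex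
operators `X_v` and plaquette operators `Z_p`. -/
def toricGS (L : ℕ) [NeZero L] : Submodule ℂ ((Edge L → ZMod 2) → ℂ) :=
  (⨅ v : Vtx L, LinearMap.ker (PX L (vStar L v) - LinearMap.id)) ⊓
    ⨅ p : Vtx L, LinearMap.ker (PZ L (pStar L p) - LinearMap.id)

/-- The Pauli `X`-part of an assignment `σ` of Pauli operators (`0 = X`,
`1 = Y`, `2 = Z`, `none` = identity) to edges. -/
def xSupp (L : ℕ) (σ : Edge L → Option (Fin 3)) : Edge L → ZMod 2 :=
  fun e => if σ e = some 0 ∨ σ e = some 1 then 1 else 0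

/-- The Pauli `Z`-part of an assignment `σ` of Pauli operators to edges. -/
def zSupp (L : ℕ) (σ : Edge L → Option (Fin 3)) : Edge L → ZMod 2 :=
  fun e => if σ e = some 1 ∨ σ e = some 2 then 1 else 0

/-- The tensor product of Pauli operators described by `σ` (using
`Y = i X Z`). -/
noncomputable def pauliProd (L : ℕ) [NeZero L] (σ : Edge L → Option (Fin 3)) :
    ((Edge L → ZMod 2) → ℂ) →ₗ[ℂ] ((Edge L → ZMod 2) → ℂ) :=
  (Complex.I ^ (Nat.card {e : Edge L // σ e = some 1})) •
    (PX L (xSupp L σ) ∘ₗ PZ L (zSupp L σ))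

/-- The error set `𝓔(k)`: all tensor products of Pauli operators `X, Y, Z`
acting on at most `k` edges. -/
def ErrSet (L : ℕ) [NeZero L] (k : ℕ) :
    Set (((Edge L → ZMod 2) → ℂ) →ₗ[ℂ] ((Edge L → ZMod 2) → ℂ)) :=
  { E | ∃ σ : Edge L → Option (Fin 3),
      Nat.card {e : Edge L // σ e ≠ none} ≤ k ∧ E = pauliProd L σ }

end QDM

namespace QDM

/-!
For Pauli errors `E₁, E₂` of weight at most `k`, the operator `E₁† E₂` is, up to a scalar, a
product of `Z`s on the edges of a `ℤ₂`-chain `b` and `X`s on the edges of a `ℤ₂`-chain `a`, both of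
weight at most `2k < L`. If some `X_v` or `Z_p` anticommutes with it, then `P E₁† E₂ P = 0`.
Otherwise `a` is a cocycle on the lattice and `b` is a cocycle on the dual lattice. Having fewer
than `L` edges, each of them vanishes on a whole row and on a whole column, so both of its periods
around the torus are zero and it is a coboundary. Hence `E₁† E₂` is a scalar times a product of
`X_v`s and `Z_p`s, and it acts on the ground space as that scalar.
-/

/-! ### Cohomology of the discrete torus -/

section Cycle

variable {L : ℕ} [NeZero L]

theorem sum_range_natCast_zmod {M : Type*} [AddCommMonoid M] (u : ZMod L → M) :
    ∑ i ∈ Finset.range L, u i = ∑ x, u x :=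
  Finset.sum_nbij' (fun i => (i : ZMod L)) ZMod.val (fun _ _ => Finset.mem_univ _)
    (fun x _ => Finset.mem_range.2 x.val_lt)
    (fun _ hi => ZMod.val_cast_of_lt (Finset.mem_range.1 hi))
    (fun x _ => x.natCast_zmod_val) (fun _ _ => rfl)

theorem eq_of_periodic_one {β : Type*} {R : ZMod L → β} (hR : Function.Periodic R 1)
    (x y : ZMod L) : R x = R y := by
  have eq_apply_zero (z : ZMod L) : R z = R 0 := by
    simpa only [mul_one, ZMod.natCast_zmod_val] using hR.nat_mul_eq z.val
  rw [eq_apply_zero x, eq_apply_zero y]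

theorem exists_primitive_of_sum_eq_zero {A : Type*} [AddCommGroup A] {u : ZMod L → A}
    (hu : ∑ x, u x = 0) :
    ∃ F : ZMod L → A, F 0 = 0 ∧ ∀ x, F (x + 1) = F x + u x := by
  refine ⟨fun x => ∑ i ∈ Finset.range x.val, u i, by simp, fun x => ?_⟩
  have sum_succ : ∑ i ∈ Finset.range (x.val + 1), u i = ∑ i ∈ Finset.range x.val, u i + u x := by
    rw [Finset.sum_range_succ, ZMod.natCast_zmod_val]
  have val_add_one_cast : x + 1 = ((x.val + 1 : ℕ) : ZMod L) := by
    rw [Nat.cast_succ, ZMod.natCast_zmod_val]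
  beta_reduce
  rw [← sum_succ, val_add_one_cast]
  rcases (show x.val + 1 ≤ L from x.val_lt).lt_or_eq with hlt | heq
  · rw [ZMod.val_cast_of_lt hlt]
  · rw [heq, sum_range_natCast_zmod, hu, ZMod.natCast_self, ZMod.val_zero, Finset.sum_range_zero]

end Cycle

section Torus

variable {L : ℕ} {A : Type*} [AddCommGroup A]

/-- The 1-cochain on the `L × L` discrete torus taking the value `h x y` on the horizontal edge and
`v x y` on the vertical edge based at `(x, y)` is closed: the two paths from the lower-left to the
upper-right corner of each plaquette have the same sum. -/
def IsClosedCochain (h v : ZMod L → ZMod L → A) : Prop :=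
  ∀ x y, h x y + v (x + 1) y = v x y + h x (y + 1)

namespace IsClosedCochain

variable {h v : ZMod L → ZMod L → A}

theorem swap (hc : IsClosedCochain h v) :
    IsClosedCochain (fun x y => v y x) (fun x y => h y x) :=
  fun x y => (hc y x).symm

variable [NeZero L]

theorem sum_row_eq (hc : IsClosedCochain h v) (y y' : ZMod L) : ∑ x, h x y = ∑ x, h x y' := by
  refine eq_of_periodic_one (R := fun y => ∑ x, h x y) (fun y => ?_) y y'
  have shift : ∑ x, v (x + 1) y = ∑ x, v x y :=
    Equiv.sum_comp (Equiv.addRight (1 : ZMod L)) fun x => v x y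
  have total : ∑ x, (h x y + v (x + 1) y) = ∑ x, (v x y + h x (y + 1)) :=
    Finset.sum_congr rfl fun x _ => hc x y
  rw [Finset.sum_add_distrib, Finset.sum_add_distrib, shift, add_comm] at total
  exact (add_left_cancel total).symm

theorem exists_potential (hc : IsClosedCochain h v) {x₀ y₀ : ZMod L}
    (hrow : ∑ x, h x y₀ = 0) (hcol : ∑ y, v x₀ y = 0) :
    ∃ f : ZMod L → ZMod L → A,
      (∀ x y, h x y = f (x + 1) y - f x y) ∧ ∀ x y, v x y = f x (y + 1) - f x y := by
  obtain ⟨F, -, hF⟩ := exists_primitive_of_sum_eq_zero ((hc.sum_row_eq 0 y₀).trans hrow)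
  choose K hK₀ hK using fun x =>
    exists_primitive_of_sum_eq_zero ((hc.swap.sum_row_eq x x₀).trans hcol)
  -- Integrate along the row `y = 0`, then up the columns.
  refine ⟨fun x y => F x + K x y, fun x y => ?_, fun x y => ?_⟩
  · have defect_periodic : Function.Periodic
        (fun y => h x y - (F (x + 1) + K (x + 1) y - (F x + K x y))) 1 := fun y => by
      have := hc x y
      simp only [hK]
      grind
    have defect_eq := eq_of_periodic_one defect_periodic y 0
    rw [← sub_eq_zero, defect_eq, hF, hK₀, hK₀]
    abel
  · simp only [hK]
    abel

end IsClosedCochain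

end Torus

/-! ### Chains of small weight -/

section Weight

variable {ι : Type*} [Fintype ι]

theorem hammingNorm_add_le {β : ι → Type*} [∀ i, AddGroup (β i)] [∀ i, DecidableEq (β i)]
    (x y : ∀ i, β i) :
    hammingNorm (x + y) ≤ hammingNorm x + hammingNorm y := by
  simpa only [hammingDist_eq_hammingNorm, neg_neg, neg_zero, add_zero, zero_add] using
    hammingDist_triangle (-x) 0 y

theorem exists_fiber_eq_zero_of_hammingNorm_lt_card {κ R : Type*} [Fintype κ] [Zero R]
    [DecidableEq R] (π : ι → κ) {a : ι → R} (ha : hammingNorm a < Fintype.card κ) :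
    ∃ k, ∀ i, π i = k → a i = 0 := by
  have hcard : (Finset.image π {i | a i ≠ 0}).card < (Finset.univ : Finset κ).card :=
    Finset.card_image_le.trans_lt ha
  obtain ⟨k, -, hk⟩ := Finset.exists_mem_notMem_of_card_lt_card hcard
  refine ⟨k, fun i hi => by_contra fun hai => hk ?_⟩
  exact Finset.mem_image.2 ⟨i, Finset.mem_filter.2 ⟨Finset.mem_univ i, hai⟩, hi⟩

end Weight

/-! ### Star and plaquette chains -/

section Stars

variable {L : ℕ}

/-- The plaquette across `e` from the plaquette whose lower-left corner is `e.1`; it is the target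
of `e` in the dual lattice, where `e.1` is the source. -/
def oppositeFace (e : Edge L) : Vtx L :=
  if e.2 then e.1 - (1, 0) else e.1 - (0, 1)

section NoSelfLoops

-- On the `1 × 1` torus every edge is a loop, and the two incidences below cancel.
variable [Fact (1 < L)]

theorem vStar_apply (v : Vtx L) (e : Edge L) :
    vStar L v e = (if e.1 = v then 1 else 0) + (if tgt e = v then 1 else 0) := by
  obtain ⟨⟨x, y⟩, d⟩ := e
  obtain ⟨x', y'⟩ := v
  simp only [vStar, src, tgt]
  cases d <;> by_cases hx : x = x' <;> by_cases hy : y = y' <;> simp [hx, hy]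

theorem pStar_apply (p : Vtx L) (e : Edge L) :
    pStar L p e = (if e.1 = p then 1 else 0) + (if oppositeFace e = p then 1 else 0) := by
  obtain ⟨⟨x, y⟩, d⟩ := e
  obtain ⟨x', y'⟩ := p
  simp only [pStar, oppositeFace]
  cases d <;> by_cases hx : x = x' <;> by_cases hy : y = y' <;>
    simp [hx, hy, sub_eq_iff_eq_add]

variable [NeZero L]

theorem sum_smul_vStar_apply (f : Vtx L → ZMod 2) (e : Edge L) :
    (∑ v, f v • vStar L v) e = f e.1 + f (tgt e) := by
  simp [Finset.sum_apply, vStar_apply, mul_add, Finset.sum_add_distrib]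

theorem sum_smul_pStar_apply (g : Vtx L → ZMod 2) (e : Edge L) :
    (∑ p, g p • pStar L p) e = g e.1 + g (oppositeFace e) := by
  simp [Finset.sum_apply, pStar_apply, mul_add, Finset.sum_add_distrib]

theorem dotProduct_vStar (b : Config (ZMod 2) L) (v : Vtx L) :
    b ⬝ᵥ vStar L v = b (v, false) + b (v - (1, 0), false) + b (v, true) + b (v - (0, 1), true) := by
  rw [dotProduct, Fintype.sum_prod_type_right]
  simp only [vStar_apply, tgt, mul_add, mul_ite, mul_one, mul_zero, Finset.sum_add_distrib,
    Fintype.sum_bool, ← eq_sub_iff_add_eq, Finset.sum_ite_eq', Finset.mem_univ, if_true,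
    Bool.false_eq_true, if_false]
  abel

theorem pStar_dotProduct (p : Vtx L) (a : Config (ZMod 2) L) :
    pStar L p ⬝ᵥ a = a (p, false) + a (p + (0, 1), false) + a (p, true) + a (p + (1, 0), true) := by
  rw [dotProduct, Fintype.sum_prod_type_right]
  simp only [pStar_apply, oppositeFace, add_mul, ite_mul, one_mul, zero_mul,
    Finset.sum_add_distrib, Fintype.sum_bool, sub_eq_iff_eq_add, Finset.sum_ite_eq',
    Finset.mem_univ, if_true, Bool.false_eq_true, if_false]
  abel

end NoSelfLoops

variable [NeZero L]

theorem exists_row_and_column_eq_zero {a : Config (ZMod 2) L} (ha : hammingNorm a < L) :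
    ∃ x₀ y₀ : ZMod L, (∀ y d, a ((x₀, y), d) = 0) ∧ ∀ x d, a ((x, y₀), d) = 0 := by
  replace ha : hammingNorm a < Fintype.card (ZMod L) := by rwa [ZMod.card]
  obtain ⟨x₀, hx₀⟩ := exists_fiber_eq_zero_of_hammingNorm_lt_card (fun e : Edge L => e.1.1) ha
  obtain ⟨y₀, hy₀⟩ := exists_fiber_eq_zero_of_hammingNorm_lt_card (fun e : Edge L => e.1.2) ha
  exact ⟨x₀, y₀, fun _ _ => hx₀ _ rfl, fun _ _ => hy₀ _ rfl⟩

theorem eq_zero_or_one_lt_of_hammingNorm_lt {a : Config (ZMod 2) L} (ha : hammingNorm a < L) :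
    a = 0 ∨ 1 < L := by
  by_contra! hne
  have : 0 < hammingNorm a := hammingNorm_pos_iff.2 hne.1
  lia

theorem mem_span_vStar_of_pStar_dotProduct_eq_zero {a : Config (ZMod 2) L}
    (ha : hammingNorm a < L) (hcocycle : ∀ p, pStar L p ⬝ᵥ a = 0) :
    a ∈ Submodule.span (ZMod 2) (Set.range (vStar L)) := by
  rcases eq_zero_or_one_lt_of_hammingNorm_lt ha with rfl | hL
  · exact Submodule.zero_mem _
  have : Fact (1 < L) := ⟨hL⟩
  have hclosed : IsClosedCochain (fun x y => a ((x, y), false)) (fun x y => a ((x, y), true)) :=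
    fun x y => by
      have := hcocycle (x, y)
      simp only [pStar_dotProduct, Prod.mk_add_mk, add_zero] at this
      grind
  obtain ⟨x₀, y₀, hcol, hrow⟩ := exists_row_and_column_eq_zero ha
  obtain ⟨f, hf_right, hf_up⟩ := hclosed.exists_potential
    (Finset.sum_eq_zero fun x _ => hrow x false) (Finset.sum_eq_zero fun y _ => hcol y true)
  refine (Submodule.mem_span_range_iff_exists_fun (ZMod 2)).2 ⟨fun v => f v.1 v.2, ?_⟩
  funext ⟨⟨x, y⟩, d⟩
  rw [sum_smul_vStar_apply, add_comm, ← CharTwo.sub_eq_add]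
  cases d
  · simpa [tgt] using (hf_right x y).symm
  · simpa [tgt] using (hf_up x y).symm

theorem mem_span_pStar_of_dotProduct_vStar_eq_zero {b : Config (ZMod 2) L}
    (hb : hammingNorm b < L) (hcocycle : ∀ v, b ⬝ᵥ vStar L v = 0) :
    b ∈ Submodule.span (ZMod 2) (Set.range (pStar L)) := by
  rcases eq_zero_or_one_lt_of_hammingNorm_lt hb with rfl | hL
  · exact Submodule.zero_mem _
  have : Fact (1 < L) := ⟨hL⟩
  -- The horizontal dual edge leaving the plaquette `(x, y)` crosses the vertical edge at its right.
  have hclosed : IsClosedCochain (fun x y => b ((x + 1, y), true))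
      (fun x y => b ((x, y + 1), false)) := fun x y => by
    have := hcocycle (x + 1, y + 1)
    simp only [dotProduct_vStar, Prod.mk_sub_mk, add_sub_cancel_right, sub_zero] at this
    grind
  obtain ⟨x₀, y₀, hcol, hrow⟩ := exists_row_and_column_eq_zero hb
  obtain ⟨g, hg_right, hg_up⟩ := hclosed.exists_potential
    (Finset.sum_eq_zero fun x _ => hrow (x + 1) true)
    (Finset.sum_eq_zero fun y _ => hcol (y + 1) false)
  refine (Submodule.mem_span_range_iff_exists_fun (ZMod 2)).2 ⟨fun p => g p.1 p.2, ?_⟩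
  funext ⟨⟨x, y⟩, d⟩
  rw [sum_smul_pStar_apply, ← CharTwo.sub_eq_add]
  cases d
  · simpa [oppositeFace] using (hg_up x (y - 1)).symm
  · simpa [oppositeFace] using (hg_right (x - 1) y).symm

end Stars

/-! ### Adjoints and orthogonal projectors -/

section Adjoint

variable {α : Type} [Fintype α] {A B : (α → ℂ) →ₗ[ℂ] (α → ℂ)}

theorem adjOp_comp (A B : (α → ℂ) →ₗ[ℂ] (α → ℂ)) : adjOp (A ∘ₗ B) = adjOp B ∘ₗ adjOp A := by
  simp [adjOp, LinearMap.toMatrix'_comp, Matrix.conjTranspose_mul, Matrix.toLin'_mul]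

theorem adjOp_adjOp (A : (α → ℂ) →ₗ[ℂ] (α → ℂ)) : adjOp (adjOp A) = A := by
  simp [adjOp]

theorem adjOp_smul (c : ℂ) (A : (α → ℂ) →ₗ[ℂ] (α → ℂ)) :
    adjOp (c • A) = starRingEnd ℂ c • adjOp A := by
  simp [adjOp, Matrix.conjTranspose_smul]

theorem adjOp_eq_of_finner_eq (h : ∀ ψ φ, finner (A ψ) φ = finner ψ (B φ)) : adjOp A = B := by
  rw [adjOp, ← LinearEquiv.eq_symm_apply, Matrix.toLin'_symm]
  ext i j
  simpa [finner, LinearMap.toMatrix'_apply, Pi.single_apply] using h (Pi.single i 1) (Pi.single j 1)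

end Adjoint

namespace IsOrthProjOnto

variable {α : Type} [Fintype α] {P S T : (α → ℂ) →ₗ[ℂ] (α → ℂ)} {W : Submodule ℂ (α → ℂ)}

theorem adjOp_eq (hP : IsOrthProjOnto P W) : adjOp P = P :=
  adjOp_eq_of_finner_eq hP.2.2

theorem apply_mem (hP : IsOrthProjOnto P W) (ψ : α → ℂ) : P ψ ∈ W :=
  hP.2.1 ▸ LinearMap.mem_range_self P ψ

theorem comp_comp_eq_zero_of_anticommute (hP : IsOrthProjOnto P W) (hS : adjOp S = S)
    (hSW : ∀ ψ ∈ W, S ψ = ψ) (hST : S ∘ₗ T = -(T ∘ₗ S)) : P ∘ₗ T ∘ₗ P = 0 := by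
  have hSP : S ∘ₗ P = P := LinearMap.ext fun ψ => hSW _ (hP.apply_mem ψ)
  have hPS : P ∘ₗ S = P := by
    simpa only [adjOp_comp, hP.adjOp_eq, hS] using congrArg adjOp hSP
  have eq_neg_self : P ∘ₗ T ∘ₗ P = -(P ∘ₗ T ∘ₗ P) :=
    calc P ∘ₗ T ∘ₗ P = P ∘ₗ (S ∘ₗ T) ∘ₗ P := by
          rw [← LinearMap.comp_assoc, ← LinearMap.comp_assoc, ← LinearMap.comp_assoc, hPS]
      _ = -(P ∘ₗ T ∘ₗ (S ∘ₗ P)) := by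
          rw [hST, LinearMap.neg_comp, LinearMap.comp_neg, LinearMap.comp_assoc]
      _ = -(P ∘ₗ T ∘ₗ P) := by rw [hSP]
  exact LinearMap.ext fun ψ => self_eq_neg.1 (LinearMap.congr_fun eq_neg_self ψ)

theorem comp_comp_eq_smul (hP : IsOrthProjOnto P W) {c : ℂ} (hT : ∀ ψ ∈ W, T ψ = c • ψ) :
    P ∘ₗ T ∘ₗ P = c • P := by
  have hTP : T ∘ₗ P = c • P := LinearMap.ext fun ψ => hT _ (hP.apply_mem ψ)
  rw [hTP, LinearMap.comp_smul, hP.1]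

theorem exists_isHermitian_of_forall_exists_smul (hP : IsOrthProjOnto P W) {ι : Type*}
    {E : ι → (α → ℂ) →ₗ[ℂ] (α → ℂ)}
    (hE : ∀ i j, ∃ c : ℂ, P ∘ₗ (adjOp (E i) ∘ₗ E j) ∘ₗ P = c • P) :
    ∃ M : Matrix ι ι ℂ, M.IsHermitian ∧
      ∀ i j, P ∘ₗ (adjOp (E i) ∘ₗ E j) ∘ₗ P = M i j • P := by
  rcases eq_or_ne P 0 with rfl | hP₀
  · exact ⟨0, Matrix.isHermitian_zero, fun i j => by simp⟩
  choose M hM using hE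
  refine ⟨Matrix.of M, Matrix.IsHermitian.ext fun i j => ?_, hM⟩
  have adj_eq := congrArg adjOp (hM j i)
  rw [adjOp_smul, adjOp_comp, adjOp_comp, adjOp_comp, adjOp_adjOp, hP.adjOp_eq,
    LinearMap.comp_assoc, hM i j] at adj_eq
  exact (smul_left_injective ℂ hP₀ adj_eq).symm

end IsOrthProjOnto

/-! ### Pauli operators -/

section Pauli

/-- The sign character `t ↦ (-1) ^ t` of `ℤ₂`, giving the eigenvalues of products of Pauli `Z`s and
the commutation signs of Pauli operators. -/
def signChar : AddChar (ZMod 2) ℂ :=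
  AddChar.zmodChar 2 neg_one_sq

theorem signChar_of_ne_zero {t : ZMod 2} (ht : t ≠ 0) : signChar t = -1 := by
  have ht₁ : t = 1 := by revert t; decide
  rw [ht₁, signChar, AddChar.zmodChar_apply, ZMod.val_one, pow_one]

theorem signChar_mul_self (t : ZMod 2) : signChar t * signChar t = 1 := by
  rw [← AddChar.map_add_eq_mul, CharTwo.add_self_eq_zero, AddChar.map_zero_eq_one]

theorem conj_signChar (t : ZMod 2) : starRingEnd ℂ (signChar t) = signChar t := by
  simp [signChar, AddChar.zmodChar_apply]

theorem neg_one_pow_sum_val {ι : Type*} (s : Finset ι) (f : ι → ZMod 2) :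
    (-1 : ℂ) ^ ∑ i ∈ s, (f i).val = signChar (∑ i ∈ s, f i) := by
  rw [← Finset.prod_pow_eq_pow_sum]
  exact (map_prod signChar.toMonoidHom (fun i => Multiplicative.ofAdd (f i)) s).symm

variable {L : ℕ}

theorem PX_apply (a : Config (ZMod 2) L) (ψ : H (ZMod 2) L) (x : Config (ZMod 2) L) :
    PX L a ψ x = ψ (x + a) := rfl

theorem PX_zero : PX L 0 = LinearMap.id := by
  ext ψ x
  simp [PX]

theorem PX_add (a a' : Config (ZMod 2) L) : PX L (a + a') = PX L a ∘ₗ PX L a' := by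
  refine LinearMap.ext fun ψ => funext fun x => ?_
  simp only [LinearMap.comp_apply, PX_apply, add_assoc]

variable [NeZero L]

theorem PZ_apply (b : Config (ZMod 2) L) (ψ : H (ZMod 2) L) (x : Config (ZMod 2) L) :
    PZ L b ψ x = signChar (b ⬝ᵥ x) * ψ x :=
  congrArg (· * ψ x) (neg_one_pow_sum_val _ _)

theorem PZ_zero : PZ L 0 = LinearMap.id := by
  refine LinearMap.ext fun ψ => funext fun x => ?_
  rw [PZ_apply, zero_dotProduct, AddChar.map_zero_eq_one, one_mul, LinearMap.id_apply]

theorem PZ_add (b b' : Config (ZMod 2) L) : PZ L (b + b') = PZ L b ∘ₗ PZ L b' := by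
  refine LinearMap.ext fun ψ => funext fun x => ?_
  simp only [LinearMap.comp_apply, PZ_apply, add_dotProduct, AddChar.map_add_eq_mul, mul_assoc]

theorem PX_comp_PZ (a b : Config (ZMod 2) L) :
    PX L a ∘ₗ PZ L b = signChar (b ⬝ᵥ a) • (PZ L b ∘ₗ PX L a) := by
  refine LinearMap.ext fun ψ => funext fun x => ?_
  simp only [LinearMap.comp_apply, LinearMap.smul_apply, Pi.smul_apply, smul_eq_mul, PX_apply,
    PZ_apply, dotProduct_add, AddChar.map_add_eq_mul]
  ring

theorem PX_comp_PZ_comp_PX (s a b : Config (ZMod 2) L) :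
    PX L s ∘ₗ (PZ L b ∘ₗ PX L a) = signChar (b ⬝ᵥ s) • ((PZ L b ∘ₗ PX L a) ∘ₗ PX L s) := by
  rw [← LinearMap.comp_assoc, PX_comp_PZ, LinearMap.smul_comp, LinearMap.comp_assoc,
    LinearMap.comp_assoc, ← PX_add, ← PX_add, add_comm]

theorem PZ_comp_PZ_comp_PX (s a b : Config (ZMod 2) L) :
    PZ L s ∘ₗ (PZ L b ∘ₗ PX L a) = signChar (s ⬝ᵥ a) • ((PZ L b ∘ₗ PX L a) ∘ₗ PZ L s) := by
  refine LinearMap.ext fun ψ => funext fun x => ?_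
  simp only [LinearMap.comp_apply, LinearMap.smul_apply, Pi.smul_apply, smul_eq_mul, PX_apply,
    PZ_apply, dotProduct_add, AddChar.map_add_eq_mul]
  linear_combination
    -signChar (s ⬝ᵥ x) * signChar (b ⬝ᵥ x) * ψ (x + a) * signChar_mul_self (s ⬝ᵥ a)

theorem adjOp_PX (a : Config (ZMod 2) L) : adjOp (PX L a) = PX L a := by
  refine adjOp_eq_of_finner_eq fun ψ φ => ?_
  refine Fintype.sum_equiv (Equiv.addRight a) _ _ fun x => ?_
  simp [PX_apply, add_assoc, CharTwo.add_self_eq_zero]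

theorem adjOp_PZ (b : Config (ZMod 2) L) : adjOp (PZ L b) = PZ L b := by
  refine adjOp_eq_of_finner_eq fun ψ φ => Finset.sum_congr rfl fun x _ => ?_
  rw [PZ_apply, PZ_apply, map_mul, conj_signChar]
  ring

theorem exists_adjOp_pauliProd_comp_pauliProd_eq_smul (σ τ : Edge L → Option (Fin 3)) :
    ∃ c : ℂ, adjOp (pauliProd L σ) ∘ₗ pauliProd L τ =
      c • (PZ L (zSupp L σ + zSupp L τ) ∘ₗ PX L (xSupp L σ + xSupp L τ)) := by
  have commute_past :
      (PZ L (zSupp L σ) ∘ₗ PX L (xSupp L σ)) ∘ₗ PX L (xSupp L τ) ∘ₗ PZ L (zSupp L τ) =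
      signChar (zSupp L τ ⬝ᵥ (xSupp L σ + xSupp L τ)) •
        (PZ L (zSupp L σ + zSupp L τ) ∘ₗ PX L (xSupp L σ + xSupp L τ)) := by
    rw [LinearMap.comp_assoc, ← LinearMap.comp_assoc _ (PX L (xSupp L τ)), ← PX_add, PX_comp_PZ,
      LinearMap.comp_smul, PZ_add, LinearMap.comp_assoc]
  rw [pauliProd, pauliProd, adjOp_smul, adjOp_comp, adjOp_PX, adjOp_PZ, LinearMap.smul_comp,
    LinearMap.comp_smul, commute_past, smul_smul, smul_smul]
  exact ⟨_, rfl⟩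

theorem hammingNorm_xSupp_le (σ : Edge L → Option (Fin 3)) :
    hammingNorm (xSupp L σ) ≤ Nat.card {e // σ e ≠ none} := by
  rw [Nat.card_eq_fintype_card, Fintype.card_subtype]
  refine Finset.card_le_card (Finset.monotone_filter_right _ fun e _ he hσ => he ?_)
  simp [xSupp, hσ]

theorem hammingNorm_zSupp_le (σ : Edge L → Option (Fin 3)) :
    hammingNorm (zSupp L σ) ≤ Nat.card {e // σ e ≠ none} := by
  rw [Nat.card_eq_fintype_card, Fintype.card_subtype]
  refine Finset.card_le_card (Finset.monotone_filter_right _ fun e _ he hσ => he ?_)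
  simp [zSupp, hσ]

end Pauli

/-! ### Errors on the toric code -/

section ToricCode

variable {L : ℕ} [NeZero L]

theorem mem_toricGS_iff {ψ : H (ZMod 2) L} :
    ψ ∈ toricGS L ↔ (∀ v, PX L (vStar L v) ψ = ψ) ∧ ∀ p, PZ L (pStar L p) ψ = ψ := by
  simp [toricGS, Submodule.mem_iInf, sub_eq_zero]

theorem PX_apply_eq_self_of_mem_span {ψ : H (ZMod 2) L} (hψ : ψ ∈ toricGS L)
    {a : Config (ZMod 2) L} (ha : a ∈ Submodule.span (ZMod 2) (Set.range (vStar L))) :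
    PX L a ψ = ψ := by
  induction ha using Submodule.span_induction with
  | mem _ hv =>
    obtain ⟨v, rfl⟩ := hv
    exact (mem_toricGS_iff.1 hψ).1 v
  | zero => rw [PX_zero, LinearMap.id_apply]
  | add a a' _ _ ha ha' => rw [PX_add, LinearMap.comp_apply, ha', ha]
  | smul t a _ ha =>
    obtain rfl | rfl : t = 0 ∨ t = 1 := by revert t; decide
    · rw [zero_smul, PX_zero, LinearMap.id_apply]
    · rw [one_smul, ha]

theorem PZ_apply_eq_self_of_mem_span {ψ : H (ZMod 2) L} (hψ : ψ ∈ toricGS L)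
    {b : Config (ZMod 2) L} (hb : b ∈ Submodule.span (ZMod 2) (Set.range (pStar L))) :
    PZ L b ψ = ψ := by
  induction hb using Submodule.span_induction with
  | mem _ hp =>
    obtain ⟨p, rfl⟩ := hp
    exact (mem_toricGS_iff.1 hψ).2 p
  | zero => rw [PZ_zero, LinearMap.id_apply]
  | add b b' _ _ hb hb' => rw [PZ_add, LinearMap.comp_apply, hb', hb]
  | smul t b _ hb =>
    obtain rfl | rfl : t = 0 ∨ t = 1 := by revert t; decide
    · rw [zero_smul, PZ_zero, LinearMap.id_apply]
    · rw [one_smul, hb]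

variable {P : H (ZMod 2) L →ₗ[ℂ] H (ZMod 2) L}

theorem comp_comp_eq_zero_of_dotProduct_vStar_ne_zero (hP : IsOrthProjOnto P (toricGS L))
    (a : Config (ZMod 2) L) {b : Config (ZMod 2) L} {v : Vtx L} (hv : b ⬝ᵥ vStar L v ≠ 0) :
    P ∘ₗ (PZ L b ∘ₗ PX L a) ∘ₗ P = 0 :=
  hP.comp_comp_eq_zero_of_anticommute (adjOp_PX (vStar L v))
    (fun _ hψ => (mem_toricGS_iff.1 hψ).1 v)
    (by rw [PX_comp_PZ_comp_PX, signChar_of_ne_zero hv]; module)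

theorem comp_comp_eq_zero_of_pStar_dotProduct_ne_zero (hP : IsOrthProjOnto P (toricGS L))
    {a : Config (ZMod 2) L} (b : Config (ZMod 2) L) {p : Vtx L} (hp : pStar L p ⬝ᵥ a ≠ 0) :
    P ∘ₗ (PZ L b ∘ₗ PX L a) ∘ₗ P = 0 :=
  hP.comp_comp_eq_zero_of_anticommute (adjOp_PZ (pStar L p))
    (fun _ hψ => (mem_toricGS_iff.1 hψ).2 p)
    (by rw [PZ_comp_PZ_comp_PX, signChar_of_ne_zero hp]; module)

theorem comp_comp_eq_zero_or_forall_apply_eq_self (hP : IsOrthProjOnto P (toricGS L))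
    {a b : Config (ZMod 2) L} (ha : hammingNorm a < L) (hb : hammingNorm b < L) :
    P ∘ₗ (PZ L b ∘ₗ PX L a) ∘ₗ P = 0 ∨ ∀ ψ ∈ toricGS L, (PZ L b ∘ₗ PX L a) ψ = ψ := by
  by_cases hbv : ∀ v, b ⬝ᵥ vStar L v = 0
  · by_cases hap : ∀ p, pStar L p ⬝ᵥ a = 0
    · refine .inr fun ψ hψ => ?_
      rw [LinearMap.comp_apply,
        PX_apply_eq_self_of_mem_span hψ (mem_span_vStar_of_pStar_dotProduct_eq_zero ha hap),
        PZ_apply_eq_self_of_mem_span hψ (mem_span_pStar_of_dotProduct_vStar_eq_zero hb hbv)]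
    · obtain ⟨p, hp⟩ := not_forall.1 hap
      exact .inl (comp_comp_eq_zero_of_pStar_dotProduct_ne_zero hP b hp)
  · obtain ⟨v, hv⟩ := not_forall.1 hbv
    exact .inl (comp_comp_eq_zero_of_dotProduct_vStar_ne_zero hP a hv)

theorem comp_adjOp_comp_comp_eq_zero_or_exists_smul {k : ℕ} (hk : 2 * k < L)
    (hP : IsOrthProjOnto P (toricGS L)) {E₁ E₂ : H (ZMod 2) L →ₗ[ℂ] H (ZMod 2) L}
    (hE₁ : E₁ ∈ ErrSet L k) (hE₂ : E₂ ∈ ErrSet L k) :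
    P ∘ₗ (adjOp E₁ ∘ₗ E₂) ∘ₗ P = 0 ∨
      ∃ c : ℂ, ∀ ψ ∈ toricGS L, (adjOp E₁ ∘ₗ E₂) ψ = c • ψ := by
  obtain ⟨σ, hσ, rfl⟩ := hE₁
  obtain ⟨τ, hτ, rfl⟩ := hE₂
  obtain ⟨c, hc⟩ := exists_adjOp_pauliProd_comp_pauliProd_eq_smul σ τ
  have hx : hammingNorm (xSupp L σ + xSupp L τ) < L := by
    have := hammingNorm_add_le (xSupp L σ) (xSupp L τ)
    have := hammingNorm_xSupp_le σ
    have := hammingNorm_xSupp_le τ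
    lia
  have hz : hammingNorm (zSupp L σ + zSupp L τ) < L := by
    have := hammingNorm_add_le (zSupp L σ) (zSupp L τ)
    have := hammingNorm_zSupp_le σ
    have := hammingNorm_zSupp_le τ
    lia
  rw [hc]
  rcases comp_comp_eq_zero_or_forall_apply_eq_self hP hx hz with hzero | hfix
  · left
    rw [LinearMap.smul_comp, LinearMap.comp_smul, hzero, smul_zero]
  · exact .inr ⟨c, fun ψ hψ => by rw [LinearMap.smul_apply, hfix ψ hψ]⟩

end ToricCode

/-- **The toric code corrects all errors on at most `⌊(L−1)/2⌋` qubits.**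
Let `P` be the orthogonal projector onto the toric code ground space and let
`k ≤ ⌊(L−1)/2⌋`.  Then for all `E₁, E₂ ∈ 𝓔(k)`, either `P E₁† E₂ P = 0` or
`E₁† E₂` acts on the ground space as a scalar; consequently the Knill–Laflamme
condition `P Eᵢ† Eⱼ P = αᵢⱼ • P` holds with `(αᵢⱼ)` a Hermitian matrix, for any
family of errors from `𝓔(k)`. -/
theorem toric_code_is_QECC (L : ℕ) [NeZero L] (k : ℕ) (hk : k ≤ (L - 1) / 2)
    (P : ((Edge L → ZMod 2) → ℂ) →ₗ[ℂ] ((Edge L → ZMod 2) → ℂ))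
    (hP : IsOrthProjOnto P (toricGS L)) :
    (∀ E₁ ∈ ErrSet L k, ∀ E₂ ∈ ErrSet L k,
      P ∘ₗ (adjOp E₁ ∘ₗ E₂) ∘ₗ P = 0 ∨
        ∃ c : ℂ, ∀ ψ ∈ toricGS L, (adjOp E₁ ∘ₗ E₂) ψ = c • ψ) ∧
    ∀ (n : ℕ) (E : Fin n → (((Edge L → ZMod 2) → ℂ) →ₗ[ℂ] ((Edge L → ZMod 2) → ℂ))),
      (∀ i, E i ∈ ErrSet L k) →
      ∃ M : Matrix (Fin n) (Fin n) ℂ, M.IsHermitian ∧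
        ∀ i j, P ∘ₗ (adjOp (E i) ∘ₗ E j) ∘ₗ P = M i j • P := by
  have hk' : 2 * k < L := by
    have := NeZero.pos L
    lia
  have dichotomy := fun E₁ hE₁ E₂ hE₂ =>
    comp_adjOp_comp_comp_eq_zero_or_exists_smul hk' hP (E₁ := E₁) (E₂ := E₂) hE₁ hE₂
  refine ⟨dichotomy, fun n E hE => hP.exists_isHermitian_of_forall_exists_smul fun i j => ?_⟩
  rcases dichotomy _ (hE i) _ (hE j) with hzero | ⟨c, hc⟩
  · exact ⟨0, by rw [hzero, zero_smul]⟩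
  · exact ⟨c, hP.comp_comp_eq_smul hc⟩

end QDM
end
end

section
/- Let A be a rectangular sublattice of Λ contained in a contractible subregion. If |g_A⟩ and |g'_A⟩ are two assignments of group elements to the edges of A such that every closed loop contained in A has trivial holonomy in both assignments, and the two assignments agree on all boundary edges of A, then there exists a (unique) product U_int of gauge transformations A_v(h_v) at vertices v strictly in the interior of A such that U_int |g_A⟩ = |g'_A⟩. -/
/-!
Kitaev's quantum double model, formalized on the concrete `L × L` periodic square
lattice on the torus (the setting of Bravyi–Hastings–Michalakis TQO conditions used
in the paper).  Vertices are `ZMod L × ZMod L`; an oriented edge is a pair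
`(v, d)` of its base vertex `v` and a direction `d : Bool` (`false` = rightward,
`true` = upward).  Each edge carries `ℂ[G]`, so the total Hilbert space is
`(Edge L → G) → ℂ` with the "group basis" given by delta functions.
"Contained in a contractible subregion" is rendered as the rectangle having side
lengths `< L`, i.e. not wrapping around the torus.
-/

open scoped BigOperators Classical

noncomputable section

namespace QDM

/-!
Integrating a flat configuration along paths issuing from the lower-left corner of `A` gives a
potential `φ` on the coordinate grid of `A`: flatness of the plaquettes yields
`x e = (φ (src e))⁻¹ * φ (tgt e)` on every edge, also on those off the chosen paths. If `φ'` is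
the potential of `x'`, then `φ'⁻¹ * φ` transforms `x` into `x'`, and it is trivial on `∂A` because
the corner is joined to every boundary vertex inside `∂A`, where `x` and `x'` agree. Conversely,
on an edge where the image of `x` is prescribed, the transformation at the source determines the
one at the target, so the trivial values on the left side of `A` determine it everywhere.
-/

section Grid

variable {L : ℕ} {c : Vtx L} {w h i j : ℕ}

/-- The vertex of the torus with coordinates `(i, j)` relative to the corner `c`. Coordinates are
natural numbers, so that rectangles can be traversed by induction; they are read modulo `L`. -/
def gridVtx (c : Vtx L) (i j : ℕ) : Vtx L := c + ((i : ZMod L), (j : ZMod L))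

theorem gridVtx_add_right (c : Vtx L) (i j : ℕ) :
    gridVtx c i j + (1, 0) = gridVtx c (i + 1) j := by
  ext <;> simp [gridVtx, add_assoc]

theorem gridVtx_add_up (c : Vtx L) (i j : ℕ) :
    gridVtx c i j + (0, 1) = gridVtx c i (j + 1) := by
  ext <;> simp [gridVtx, add_assoc]

theorem tgt_gridVtx_right (c : Vtx L) (i j : ℕ) :
    tgt (gridVtx c i j, false) = gridVtx c (i + 1) j := by
  simp [tgt, gridVtx_add_right]

theorem tgt_gridVtx_up (c : Vtx L) (i j : ℕ) :
    tgt (gridVtx c i j, true) = gridVtx c i (j + 1) := by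
  simp [tgt, gridVtx_add_up]

theorem forall_mem_rectEdges {P : Edge L → Prop} :
    (∀ e ∈ rectEdges L c w h, P e) ↔
      (∀ i j, i < w → j ≤ h → P (gridVtx c i j, false)) ∧
        ∀ i j, i ≤ w → j < h → P (gridVtx c i j, true) := by
  constructor
  · exact fun hP => ⟨fun i j hi hj => hP _ ⟨i, j, rfl, by simp [hi, hj]⟩,
      fun i j hi hj => hP _ ⟨i, j, rfl, by simp [hi, hj]⟩⟩
  · rintro ⟨hright, hup⟩ ⟨v, d⟩ ⟨i, j, rfl, hd⟩
    cases d
    · exact hright i j (by simpa using hd.1) (by simpa using hd.2)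
    · exact hup i j (by simpa using hd.1) (by simpa using hd.2)

theorem gridVtx_right_mem_rectBdryEdges (hi : i < w) (hj : j = 0 ∨ j = h) :
    (gridVtx c i j, false) ∈ rectBdryEdges L c w h :=
  ⟨i, j, rfl, by simp [hi, hj]⟩

theorem gridVtx_up_mem_rectBdryEdges (hi : i = 0 ∨ i = w) (hj : j < h) :
    (gridVtx c i j, true) ∈ rectBdryEdges L c w h :=
  ⟨i, j, rfl, by simp [hi, hj]⟩

theorem eq_of_natCast_zmod_eq_of_pos_of_lt {a : ℕ} (ha : 0 < a) (haL : a < L) (hi : i ≤ L)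
    (hia : (i : ZMod L) = a) : i = a :=
  ((ZMod.natCast_eq_natCast_iff i a L).1 hia).eq_of_abs_lt (by rw [abs_lt]; omega)

/-- Sides of length `L` are allowed: opposite sides of the rectangle are then glued together, but
an interior vertex is still not identified with any other one. -/
theorem gridVtx_mem_rectIntVtx_iff (hw : w ≤ L) (hh : h ≤ L) (hi : i ≤ w) (hj : j ≤ h) :
    gridVtx c i j ∈ rectIntVtx L c w h ↔ 0 < i ∧ i < w ∧ 0 < j ∧ j < h := by
  constructor
  · rintro ⟨a, b, ha, haw, hb, hbh, hab⟩
    obtain ⟨hia, hjb⟩ := Prod.mk.inj (add_left_cancel hab)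
    obtain rfl := eq_of_natCast_zmod_eq_of_pos_of_lt ha (by omega) (by omega) hia
    obtain rfl := eq_of_natCast_zmod_eq_of_pos_of_lt hb (by omega) (by omega) hjb
    exact ⟨ha, haw, hb, hbh⟩
  · rintro ⟨hi₀, hiw, hj₀, hjh⟩
    exact ⟨i, j, hi₀, hiw, hj₀, hjh, rfl⟩

theorem exists_eq_on_gridVtx_of_eq_one_of_boundary {M : Type*} [One M] (c : Vtx L) (hw : w ≤ L)
    (hh : h ≤ L) (k : ℕ → ℕ → M)
    (hk : ∀ i j, i ≤ w → j ≤ h → ¬(0 < i ∧ i < w ∧ 0 < j ∧ j < h) → k i j = 1) :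
    ∃ f : Vtx L → M, (∀ v ∉ rectIntVtx L c w h, f v = 1) ∧
      ∀ i j, i ≤ w → j ≤ h → f (gridVtx c i j) = k i j := by
  refine ⟨fun v => if v ∈ rectIntVtx L c w h then k (v - c).1.val (v - c).2.val else 1,
    fun v hv => if_neg hv, fun i j hi hj => ?_⟩
  by_cases hint : 0 < i ∧ i < w ∧ 0 < j ∧ j < h
  · have hmem := (gridVtx_mem_rectIntVtx_iff (c := c) hw hh hi hj).2 hint
    have hival : (i : ZMod L).val = i := ZMod.val_cast_of_lt (by omega)
    have hjval : (j : ZMod L).val = j := ZMod.val_cast_of_lt (by omega)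
    refine (if_pos hmem).trans ?_
    simp only [gridVtx, add_sub_cancel_left, hival, hjval]
  · have hmem := mt (gridVtx_mem_rectIntVtx_iff (c := c) hw hh hi hj).1 hint
    simp only [if_neg hmem, hk i j hi hj hint]

end Grid

section Plaquette

variable {G : Type} [Group G] {L : ℕ} {c : Vtx L} {w h : ℕ}

theorem isLoop_plaqBoundary (p : Vtx L) : IsLoop (plaqBoundary p) := by
  refine ⟨by simp [plaqBoundary], ?_, ?_⟩
  · change List.IsChain _ _
    simp [plaqBoundary, stepStart, stepEnd, src, tgt, add_assoc]
  · simp [plaqBoundary, stepStart, stepEnd, src, tgt]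

theorem mem_rectEdges_of_mem_plaqBoundary {p : Vtx L} (hp : p ∈ rectPlaqs L c w h) :
    ∀ s ∈ plaqBoundary p, s.1 ∈ rectEdges L c w h := by
  obtain ⟨i, j, hi, hj, rfl⟩ := hp
  obtain ⟨hright, hup⟩ := (forall_mem_rectEdges (c := c) (w := w) (h := h)).1 fun _ => id
  change ∀ s ∈ plaqBoundary (gridVtx c i j), _
  simp only [plaqBoundary, gridVtx_add_right, gridVtx_add_up, List.forall_mem_cons,
    List.not_mem_nil, false_imp_iff, implies_true, and_true]
  exact ⟨hright i j hi hj.le, hup (i + 1) j hi hj, hright i (j + 1) hi hj, hup i j hi.le hj⟩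

theorem hol_plaqBoundary_eq_one_iff (x : Config G L) (p : Vtx L) :
    hol x (plaqBoundary p) = 1 ↔
      x (p, false) * x (p + (1, 0), true) = x (p, true) * x (p + (0, 1), false) := by
  rw [← mul_inv_eq_one (b := x (p, true) * _)]
  simp [hol, plaqBoundary, mul_assoc]

end Plaquette

section CornerHolonomy

variable {G : Type} [Group G] {L : ℕ} {c : Vtx L} {x x' : Config G L} {w h i j : ℕ}

/-- The path from `c` to `gridVtx c i j` which first goes right along the bottom row and then
up along column `i`. -/
def cornerPath (c : Vtx L) (i j : ℕ) : List (Step L) :=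
  (List.range i).map (fun a => ((gridVtx c a 0, false), true)) ++
    (List.range j).map (fun b => ((gridVtx c i b, true), true))

/-- The potential at `gridVtx c i j` of a flat configuration, normalized to be `1` at `c`. -/
def cornerHol (x : Config G L) (c : Vtx L) (i j : ℕ) : G := hol x (cornerPath c i j)

theorem cornerHol_mul_up (x : Config G L) (c : Vtx L) (i j : ℕ) :
    cornerHol x c i j * x (gridVtx c i j, true) = cornerHol x c i (j + 1) := by
  simp [cornerHol, cornerPath, hol, List.range_succ, mul_assoc]

theorem cornerHol_zero_mul_right (x : Config G L) (c : Vtx L) (i : ℕ) :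
    cornerHol x c i 0 * x (gridVtx c i 0, false) = cornerHol x c (i + 1) 0 := by
  simp [cornerHol, cornerPath, hol, List.range_succ]

theorem cornerHol_mul_right_of_flat
    (hx : ∀ b < j, hol x (plaqBoundary (gridVtx c i b)) = 1) :
    cornerHol x c i j * x (gridVtx c i j, false) = cornerHol x c (i + 1) j := by
  induction j with
  | zero => exact cornerHol_zero_mul_right x c i
  | succ j ih =>
    have hflat := (hol_plaqBoundary_eq_one_iff x _).1 (hx j j.lt_succ_self)
    rw [gridVtx_add_right, gridVtx_add_up] at hflat
    rw [← cornerHol_mul_up, ← cornerHol_mul_up, mul_assoc, ← hflat, ← mul_assoc,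
      ih fun b hb => hx b (hb.trans j.lt_succ_self)]

theorem cornerHol_congr (hrow : ∀ a < i, x (gridVtx c a 0, false) = x' (gridVtx c a 0, false))
    (hcol : ∀ b < j, x (gridVtx c i b, true) = x' (gridVtx c i b, true)) :
    cornerHol x c i j = cornerHol x' c i j := by
  refine congrArg List.prod (List.map_congr_left fun s hs => ?_)
  simp only [cornerPath, List.mem_append, List.mem_map, List.mem_range] at hs
  obtain ⟨a, ha, rfl⟩ | ⟨b, hb, rfl⟩ := hs
  · simp [hrow a ha]
  · simp [hcol b hb]

theorem cornerHol_eq_of_boundary (hx : ∀ p ∈ rectPlaqs L c w h, hol x (plaqBoundary p) = 1)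
    (hx' : ∀ p ∈ rectPlaqs L c w h, hol x' (plaqBoundary p) = 1)
    (hbdry : ∀ e ∈ rectBdryEdges L c w h, x e = x' e) (hi : i ≤ w) (hj : j ≤ h)
    (hij : ¬(0 < i ∧ i < w ∧ 0 < j ∧ j < h)) :
    cornerHol x c i j = cornerHol x' c i j := by
  have hrow : ∀ a < w, x (gridVtx c a 0, false) = x' (gridVtx c a 0, false) := fun a ha =>
    hbdry _ (gridVtx_right_mem_rectBdryEdges ha (.inl rfl))
  have hside : ∀ i j, i = 0 ∨ i = w → j ≤ h → cornerHol x c i j = cornerHol x' c i j :=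
    fun i j hi hj => cornerHol_congr (fun a ha => hrow a (by omega))
      fun b hb => hbdry _ (gridVtx_up_mem_rectBdryEdges hi (by omega))
  have htop : ∀ i ≤ w, cornerHol x c i h = cornerHol x' c i h := by
    intro i hi
    induction i with
    | zero => exact hside 0 h (.inl rfl) le_rfl
    | succ i ih =>
      rw [← cornerHol_mul_right_of_flat fun b hb => hx _ ⟨i, b, hi, hb, rfl⟩,
        ← cornerHol_mul_right_of_flat fun b hb => hx' _ ⟨i, b, hi, hb, rfl⟩,
        ih (by omega), hbdry _ (gridVtx_right_mem_rectBdryEdges hi (.inr rfl))]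
  obtain hi' | rfl | rfl : (i = 0 ∨ i = w) ∨ j = 0 ∨ j = h := by omega
  · exact hside i j hi' hj
  · exact cornerHol_congr (fun a ha => hrow a (by omega)) (by simp)
  · exact htop i hi

end CornerHolonomy

section Gauge

variable {G : Type} [Group G] {L : ℕ} {c : Vtx L} {x x' : Config G L} {w h i j : ℕ}

theorem gaugeAll_apply_eq_of_potentials {e : Edge L} {f : Vtx L → G} {p q p' q' : G}
    (hx : p * x e = q) (hx' : p' * x' e = q') (hsrc : f (src e) = p'⁻¹ * p)
    (htgt : f (tgt e) = q'⁻¹ * q) : gaugeAll f x e = x' e := by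
  rw [gaugeAll, hsrc, htgt, ← hx, ← hx']
  group

theorem exists_interior_gauge_of_flat (hw : w ≤ L) (hh : h ≤ L)
    (hx : ∀ p ∈ rectPlaqs L c w h, hol x (plaqBoundary p) = 1)
    (hx' : ∀ p ∈ rectPlaqs L c w h, hol x' (plaqBoundary p) = 1)
    (hbdry : ∀ e ∈ rectBdryEdges L c w h, x e = x' e) :
    ∃ f : Vtx L → G, (∀ v ∉ rectIntVtx L c w h, f v = 1) ∧
      ∀ e ∈ rectEdges L c w h, x' e = gaugeAll f x e := by
  obtain ⟨f, hf_one, hf⟩ := exists_eq_on_gridVtx_of_eq_one_of_boundary c hw hh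
    (fun i j => (cornerHol x' c i j)⁻¹ * cornerHol x c i j) fun i j hi hj hij => by
      rw [cornerHol_eq_of_boundary hx hx' hbdry hi hj hij, inv_mul_cancel]
  refine ⟨f, hf_one, forall_mem_rectEdges.2 ⟨fun i j hi hj => ?_, fun i j hi hj => ?_⟩⟩
  · exact (gaugeAll_apply_eq_of_potentials
      (cornerHol_mul_right_of_flat fun b hb => hx _ ⟨i, b, hi, by omega, rfl⟩)
      (cornerHol_mul_right_of_flat fun b hb => hx' _ ⟨i, b, hi, by omega, rfl⟩)
      (hf i j hi.le hj) (by rw [tgt_gridVtx_right, hf (i + 1) j hi hj])).symm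
  · exact (gaugeAll_apply_eq_of_potentials (cornerHol_mul_up x c i j) (cornerHol_mul_up x' c i j)
      (hf i j hi hj.le) (by rw [tgt_gridVtx_up, hf i (j + 1) hi hj])).symm

variable {f g : Vtx L → G}

theorem eq_tgt_of_gaugeAll_apply_eq {e : Edge L} (hfg : gaugeAll f x e = gaugeAll g x e)
    (hsrc : f (src e) = g (src e)) : f (tgt e) = g (tgt e) := by
  simpa [gaugeAll, hsrc] using hfg

theorem eq_gridVtx_of_gaugeAll_eq_on_row
    (hfg : ∀ a < i, gaugeAll f x (gridVtx c a j, false) = gaugeAll g x (gridVtx c a j, false))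
    (hleft : f (gridVtx c 0 j) = g (gridVtx c 0 j)) :
    f (gridVtx c i j) = g (gridVtx c i j) := by
  induction i with
  | zero => exact hleft
  | succ i ih =>
    rw [← tgt_gridVtx_right]
    exact eq_tgt_of_gaugeAll_apply_eq (hfg i i.lt_succ_self)
      (ih fun a ha => hfg a (ha.trans i.lt_succ_self))

theorem eq_of_gaugeAll_eq_on_rectEdges (hw : w ≤ L) (hh : h ≤ L)
    (hf : ∀ v ∉ rectIntVtx L c w h, f v = 1) (hg : ∀ v ∉ rectIntVtx L c w h, g v = 1)
    (hfg : ∀ e ∈ rectEdges L c w h, gaugeAll f x e = gaugeAll g x e) : f = g := by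
  funext v
  by_cases hv : v ∈ rectIntVtx L c w h
  · obtain ⟨i, j, -, hi, -, hj, rfl⟩ := hv
    have hleft : gridVtx c 0 j ∉ rectIntVtx L c w h := fun hmem =>
      ((gridVtx_mem_rectIntVtx_iff hw hh (Nat.zero_le w) hj.le).1 hmem).1.false
    exact eq_gridVtx_of_gaugeAll_eq_on_row
      (fun a ha => (forall_mem_rectEdges.1 hfg).1 a j (ha.trans hi) hj.le)
      ((hf _ hleft).trans (hg _ hleft).symm)
  · rw [hf v hv, hg v hv]

end Gauge

theorem interior_gauge_transformation_exists_unique_general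
    {G : Type} [Group G] {L : ℕ} {c : Vtx L} {w h : ℕ} (hw : w ≤ L) (hh : h ≤ L)
    {x x' : Config G L} (hx : ∀ p ∈ rectPlaqs L c w h, hol x (plaqBoundary p) = 1)
    (hx' : ∀ p ∈ rectPlaqs L c w h, hol x' (plaqBoundary p) = 1)
    (hbdry : ∀ e ∈ rectBdryEdges L c w h, x e = x' e) :
    ∃! f : Vtx L → G, (∀ v ∉ rectIntVtx L c w h, f v = 1) ∧
      ∀ e ∈ rectEdges L c w h, x' e = gaugeAll f x e := by
  obtain ⟨f, hf_one, hf⟩ := exists_interior_gauge_of_flat hw hh hx hx' hbdry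
  exact ⟨f, ⟨hf_one, hf⟩, fun g ⟨hg_one, hg⟩ => eq_of_gaugeAll_eq_on_rectEdges hw hh hg_one hf_one
    fun e he => (hg e he).symm.trans (hf e he)⟩

/-- **Interior gauge transformations.**  Let `A` be a `w × h` rectangular
sublattice contained in a contractible subregion (rendered as `w < L`,
`h < L`).  If two configurations `x, x'` both have trivial holonomy along every
closed loop contained in the edges of `A`, and they agree on all boundary edges
of `A`, then there is a unique product `U_int` of gauge transformations at
vertices strictly in the interior of `A` — i.e. a unique `f : V → G` supported
on the interior vertices of `A` — transforming `x` into `x'` on the edges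
of `A`. -/
theorem interior_gauge_transformation_exists_unique
    (G : Type) [Group G] (L : ℕ) [NeZero L] (c : Vtx L) (w h : ℕ)
    (hw : w < L) (hh : h < L) (x x' : Config G L)
    (htriv : ∀ γ : List (Step L), IsLoop γ → (∀ s ∈ γ, s.1 ∈ rectEdges L c w h) →
      hol x γ = 1 ∧ hol x' γ = 1)
    (hbdry : ∀ e ∈ rectBdryEdges L c w h, x e = x' e) :
    ∃! f : Vtx L → G, (∀ v : Vtx L, v ∉ rectIntVtx L c w h → f v = 1) ∧
      ∀ e ∈ rectEdges L c w h, x' e = f (src e) * x e * (f (tgt e))⁻¹ := by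
  have hflat p (hp : p ∈ rectPlaqs L c w h) :=
    htriv _ (isLoop_plaqBoundary p) (mem_rectEdges_of_mem_plaqBoundary hp)
  exact interior_gauge_transformation_exists_unique_general hw.le hh.le
    (fun p hp => (hflat p hp).1) (fun p hp => (hflat p hp).2) hbdry

end QDM
end
end

section
/- Let G be a finite group with set of inequivalent irreducible complex representations Ĝ, let d_R be the dimension of irrep R, and for an L-tuple R⃗ = (R₁,…,R_L) of irreps let N_{R⃗} be the dimension of the G-invariant subspace (the multiplicity of the trivial representation) of the tensor product R₁ ⊗ … ⊗ R_L under the diagonal G-action, and d_{R⃗} = Π_{i=1}^L d_{R_i}. Then Σ_{R⃗ ∈ Ĝ^L} d_{R⃗} · N_{R⃗} = |G|^{L−1} for every L ≥ 1. -/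
/-!
Representation-theoretic facts about multiplicities of the trivial
representation in tensor products of irreducibles, used in the computation of
the topological entanglement entropy of Kitaev's quantum double model.
-/

open scoped BigOperators TensorProduct Classical

noncomputable section

namespace QDM

/-- A representation is irreducible if its space is nonzero and has no proper
nonzero invariant subspace. -/
def IsIrred {G W : Type} [Group G] [AddCommGroup W] [Module ℂ W]
    (ρ : Representation ℂ G W) : Prop :=
  Nontrivial W ∧
    ∀ p : Submodule ℂ W, (∀ (g : G), ∀ x ∈ p, ρ g x ∈ p) → p = ⊥ ∨ p = ⊤

/-- Two representations are isomorphic if there is a `G`-equivariant linear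
isomorphism between them. -/
def RepIso {G W U : Type} [Group G] [AddCommGroup W] [Module ℂ W]
    [AddCommGroup U] [Module ℂ U]
    (ρ : Representation ℂ G W) (σ : Representation ℂ G U) : Prop :=
  ∃ e : W ≃ₗ[ℂ] U, ∀ (g : G) (x : W), e (ρ g x) = σ g (e x)

/-- `(W i, ρ i)_{i : ι}` is a complete family of pairwise non-isomorphic
irreducible complex representations of `G` — i.e. `ι` is (a copy of) `Ĝ`. -/
structure CompleteIrrepFamily (G : Type) [Group G] (ι : Type) (W : ι → Type)
    [∀ i, AddCommGroup (W i)] [∀ i, Module ℂ (W i)]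
    (ρ : ∀ i, Representation ℂ G (W i)) : Prop where
  finiteDim : ∀ i, FiniteDimensional ℂ (W i)
  irred : ∀ i, IsIrred (ρ i)
  nonIso : ∀ i j, i ≠ j → ¬ RepIso (ρ i) (ρ j)
  complete : ∀ (U : Type) [AddCommGroup U] [Module ℂ U] [FiniteDimensional ℂ U]
    (σ : Representation ℂ G U), IsIrred σ → ∃ i, RepIso σ (ρ i)

/-- The diagonal action of `G` on the tensor product `⨂ᵢ Wᵢ` of a family of
representations. -/
noncomputable def piTensorRep {G : Type} [Group G] {κ : Type} [Fintype κ]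
    {W : κ → Type} [∀ k, AddCommGroup (W k)] [∀ k, Module ℂ (W k)]
    (ρ : ∀ k, Representation ℂ G (W k)) :
    Representation ℂ G (⨂[ℂ] k, W k) :=
  (PiTensorProduct.mapMonoidHom).comp (Pi.monoidHom ρ)

/-- `Ninv ρ R` is the dimension of the subspace of `G`-invariant vectors of the
tensor product `R₁ ⊗ ⋯ ⊗ R_L` under the diagonal action, i.e. the multiplicity
`N_{R⃗}` of the trivial representation. -/
noncomputable def Ninv {G ι : Type} [Group G] {W : ι → Type}
    [∀ i, AddCommGroup (W i)] [∀ i, Module ℂ (W i)]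
    (ρ : ∀ i, Representation ℂ G (W i)) {Lc : ℕ} (R : Fin Lc → ι) : ℕ :=
  Module.finrank ℂ (piTensorRep fun k => ρ (R k)).invariants

/-- The submodule of `G`-equivariant linear maps between two representations.
Its dimension (over `ℂ`, where representations of a finite group are
semisimple) is the multiplicity `N_{r → Q}` of the irreducible `r` in `Q`. -/
def equivMaps {G W U : Type} [Group G] [AddCommGroup W] [Module ℂ W]
    [AddCommGroup U] [Module ℂ U]
    (ρ : Representation ℂ G W) (σ : Representation ℂ G U) :
    Submodule ℂ (W →ₗ[ℂ] U) where
  carrier := { f | ∀ (g : G) (x : W), f (ρ g x) = σ g (f x) }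
  add_mem' := by
    intro f₁ f₂ h₁ h₂ g x
    simp [h₁ g x, h₂ g x]
  zero_mem' := by intro g x; simp
  smul_mem' := by
    intro t f hf g x
    simp [hf g x]

end QDM

namespace QDM

/-!
The projection formula gives `N_R = |G|⁻¹ ∑_g ∏ₖ χ_{Rₖ}(g)`, so the sum over tuples factorises:
`∑_R d_R N_R = |G|⁻¹ ∑_g (∑ᵢ dᵢ χᵢ(g)) ^ L`. The inner sum is the character of the regular
representation, since `⟨χ_reg, χᵢ⟩ = χᵢ(1) = dᵢ` and `χ_reg` is a combination of irreducible
characters by Maschke's theorem. It equals `|G|` at `g = 1` and vanishes elsewhere, so only the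
term `|G|⁻¹ |G| ^ L` survives.
-/

open Module Representation

section Tensor

variable {R κ : Type*} [CommRing R] {M : κ → Type*} [∀ i, AddCommGroup (M i)]
  [∀ i, Module R (M i)]

theorem trace_piTensorProduct_map [Fintype κ] [∀ i, Module.Finite R (M i)]
    [∀ i, Module.Free R (M i)] (f : ∀ i, M i →ₗ[R] M i) :
    LinearMap.trace R (⨂[R] i, M i) (PiTensorProduct.map f) =
      ∏ i, LinearMap.trace R (M i) (f i) := by
  let b i := Free.chooseBasis R (M i)
  simp only [LinearMap.trace_eq_matrix_trace R (Basis.piTensorProduct b),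
    fun i ↦ LinearMap.trace_eq_matrix_trace R (b i) (f i), Matrix.trace, Matrix.diag_apply,
    LinearMap.toMatrix_apply, Basis.piTensorProduct_apply, PiTensorProduct.map_tprod,
    Basis.piTensorProduct_repr_tprod_apply, Fintype.prod_sum]

/-- The diagonal action on a tensor product of representations: `piTensorRep` over an arbitrary
commutative ring, for an arbitrary index type, and in arbitrary universes. -/
def diagonalTensor {G : Type*} [Monoid G] (ρ : ∀ i, Representation R G (M i)) :
    Representation R G (⨂[R] i, M i) :=
  PiTensorProduct.mapMonoidHom.comp (MonoidHom.pi ρ)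

theorem character_diagonalTensor {k G : Type*} [Field k] [Monoid G] [Fintype κ] {W : κ → Type*}
    [∀ i, AddCommGroup (W i)] [∀ i, Module k (W i)] [∀ i, FiniteDimensional k (W i)]
    (ρ : ∀ i, Representation k G (W i)) (g : G) :
    (diagonalTensor ρ).character g = ∏ i, (ρ i).character g :=
  trace_piTensorProduct_map fun i ↦ ρ i g

end Tensor

section Regular

variable {k G : Type*} [Field k]

theorem character_ofMulAction [Monoid G] (X : Type*) [MulAction G X] [Finite X] (g : G) :
    (ofMulAction k G X).character g = Nat.card (MulAction.fixedBy X g) := by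
  have := Fintype.ofFinite X
  let b : Basis X k (MonoidAlgebra k X) := .ofRepr (MonoidAlgebra.coeffLinearEquiv k)
  have hb (x : X) : b x = MonoidAlgebra.single x 1 := by simp [b]
  have hdiag (x : X) :
      LinearMap.toMatrix b b (ofMulAction k G X g) x x = if g • x = x then 1 else 0 := by
    rw [LinearMap.toMatrix_apply, hb, ofMulAction_single]
    simp [b, Finsupp.single_apply]
  rw [Representation.character, LinearMap.trace_eq_matrix_trace k b, Matrix.trace]
  simp [hdiag, Nat.card_eq_fintype_card, Fintype.card_subtype, MulAction.mem_fixedBy]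

theorem character_leftRegular [Group G] [Finite G] (g : G) :
    (leftRegular k G).character g = if g = 1 then (Nat.card G : k) else 0 := by
  rw [character_ofMulAction]
  split_ifs with hg
  · simp [hg]
  · simp [hg, MulAction.fixedBy]

end Regular

section Decomposition

variable {k G V : Type*} [Field k] [Monoid G] [AddCommGroup V] [Module k V]

theorem isIrreducible_toRepresentation_of_isAtom {σ : Representation k G V}
    {τ : Subrepresentation σ} (hτ : IsAtom τ) : τ.toRepresentation.IsIrreducible := by
  let incl (a : Subrepresentation τ.toRepresentation) : Subrepresentation σ :=
    ⟨a.toSubmodule.map τ.toSubmodule.subtype, by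
      rintro g _ ⟨v, hv, rfl⟩
      exact ⟨τ.toRepresentation g v, a.apply_mem_toSubmodule g hv, rfl⟩⟩
  have incl_le (a) : incl a ≤ τ := Submodule.map_subtype_le τ.toSubmodule a.toSubmodule
  have incl_injective : Function.Injective incl := fun a b h ↦
    Subrepresentation.toSubmodule_injective <| Submodule.map_injective_of_injective
      τ.toSubmodule.injective_subtype (congrArg Subrepresentation.toSubmodule h)
  have incl_bot : incl ⊥ = ⊥ := Subrepresentation.toSubmodule_injective (Submodule.map_bot _)
  have incl_top : incl ⊤ = τ :=
    Subrepresentation.toSubmodule_injective (Submodule.map_subtype_top _)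
  refine { exists_pair_ne := ⟨⊥, ⊤, fun h ↦ hτ.1 ?_⟩, eq_bot_or_eq_top := fun a ↦ ?_ }
  · rw [← incl_top, ← h, incl_bot]
  · exact (hτ.le_iff.mp (incl_le a)).imp (fun h ↦ incl_injective (h.trans incl_bot.symm))
      fun h ↦ incl_injective (h.trans incl_top.symm)

theorem exists_isInternal_isAtom (σ : Representation k G V) [IsSemisimpleRepresentation σ] :
    ∃ s : Set (Subrepresentation σ), (∀ τ ∈ s, IsAtom τ) ∧
      DirectSum.IsInternal fun τ : s ↦ τ.1.toSubmodule := by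
  have : IsSemisimpleModule (MonoidAlgebra k G) σ.asModule :=
    (isSemisimpleRepresentation_iff_isSemisimpleModule_asModule σ).mp inferInstance
  obtain ⟨s, hindep, hsup, hsimple⟩ :=
    IsSemisimpleModule.exists_sSupIndep_sSup_simples_eq_top (MonoidAlgebra k G) σ.asModule
  let e := Subrepresentation.subrepresentationSubmoduleOrderIso (ρ := σ)
  have hindep' : iSupIndep fun τ : e ⁻¹' s ↦ e τ :=
    ((sSupIndep_iff s).mp hindep).comp (e.injective.restrictPreimage s)
  have hsup' : ⨆ τ : e ⁻¹' s, e τ = ⊤ := by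
    rw [← hsup, ← sSup_image', Set.image_preimage_eq s e.surjective]
  have hinternal : DirectSum.IsInternal fun τ : e ⁻¹' s ↦ e τ :=
    DirectSum.isInternal_submodule_of_iSupIndep_of_iSup_eq_top hindep' hsup'
  -- `IsInternal` only sees the underlying additive submonoids, so it descends from `k[G]` to `k`.
  exact ⟨e ⁻¹' s, fun τ hτ ↦ (e.isAtom_iff τ).mp (isSimpleModule_iff_isAtom.mp (hsimple _ hτ)),
    hinternal⟩

theorem exists_finset_irreducible_character_eq_sum (σ : Representation k G V)
    [IsSemisimpleRepresentation σ] [FiniteDimensional k V] :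
    ∃ s : Finset (Subrepresentation σ), (∀ τ ∈ s, τ.toRepresentation.IsIrreducible) ∧
      σ.character = ∑ τ ∈ s, τ.toRepresentation.character := by
  obtain ⟨s, hatom, hinternal⟩ := exists_isInternal_isAtom σ
  have hne_bot (τ : s) : τ.1.toSubmodule ≠ ⊥ := fun h ↦
    (hatom τ τ.2).1 (Subrepresentation.toSubmodule_injective h)
  have : Finite s := WellFoundedGT.finite_of_iSupIndep hinternal.submodule_iSupIndep hne_bot
  have := Fintype.ofFinite s
  refine ⟨s.toFinset, fun τ hτ ↦ isIrreducible_toRepresentation_of_isAtom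
    (hatom τ (Set.mem_toFinset.mp hτ)), funext fun g ↦ ?_⟩
  rw [Finset.sum_apply, Finset.sum_subtype (p := (· ∈ s)) _ fun _ ↦ Set.mem_toFinset]
  exact LinearMap.trace_eq_sum_trace_restrict hinternal fun τ ↦ τ.1.apply_mem_toSubmodule g

end Decomposition

section IrrepSystem

variable {k G ι : Type*} [Field k] [Group G] {W : ι → Type*} [∀ i, AddCommGroup (W i)]
  [∀ i, Module k (W i)] {ρ : ∀ i, Representation k G (W i)}

/-- `ρ` is a system of representatives for the irreducible representations of `G` over `k`.
Completeness is only required of the irreducible subrepresentations of the regular representation,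
which keeps the definition free of a quantification over a universe of representations. -/
structure IsIrrepSystem (ρ : ∀ i, Representation k G (W i)) : Prop where
  irreducible : ∀ i, (ρ i).IsIrreducible
  eq_of_equiv : ∀ i j, (ρ i).Equiv (ρ j) → i = j
  exists_equiv : ∀ τ : Subrepresentation (leftRegular k G), τ.toRepresentation.IsIrreducible →
    ∃ i, Nonempty (τ.toRepresentation.Equiv (ρ i))

namespace IsIrrepSystem

theorem character_leftRegular_mem_span [Finite G] [NeZero (Nat.card G : k)]
    (hρ : IsIrrepSystem ρ) :
    (leftRegular k G).character ∈ Submodule.span k (Set.range fun i ↦ (ρ i).character) := by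
  obtain ⟨s, hirr, hchar⟩ := exists_finset_irreducible_character_eq_sum (leftRegular k G)
  rw [hchar]
  refine Submodule.sum_mem _ fun τ hτ ↦ ?_
  obtain ⟨i, ⟨e⟩⟩ := hρ.exists_equiv τ (hirr τ hτ)
  exact Submodule.subset_span ⟨i, (char_iso e).symm⟩

variable [NeZero (Nat.card G : k)] [IsAlgClosed k] [∀ i, FiniteDimensional k (W i)]

theorem card_inv_mul_sum_character_mul_character_inv [Fintype G] (hρ : IsIrrepSystem ρ)
    (i j : ι) :
    (Nat.card G : k)⁻¹ * ∑ g, (ρ i).character g * (ρ j).character g⁻¹ =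
      if i = j then 1 else 0 := by
  have := invertibleOfNonzero (NeZero.ne (Nat.card G : k))
  have := hρ.irreducible
  have nonempty_equiv_iff : Nonempty ((ρ j).Equiv (ρ i)) ↔ i = j :=
    ⟨fun ⟨e⟩ ↦ (hρ.eq_of_equiv j i e).symm, by rintro rfl; exact ⟨.refl _⟩⟩
  simp only [char_orthonormal, nonempty_equiv_iff]

variable [Fintype ι]

theorem eq_sum_smul_character_of_mem_span [Fintype G] (hρ : IsIrrepSystem ρ) {f : G → k}
    (hf : f ∈ Submodule.span k (Set.range fun i ↦ (ρ i).character)) :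
    f = ∑ i, ((Nat.card G : k)⁻¹ * ∑ g, f g * (ρ i).character g⁻¹) • (ρ i).character := by
  obtain ⟨c, rfl⟩ := (Submodule.mem_span_range_iff_exists_fun k).mp hf
  refine Finset.sum_congr rfl fun i _ ↦ congrArg (· • (ρ i).character) (Eq.symm ?_)
  calc (Nat.card G : k)⁻¹ * ∑ g, (∑ j, c j • (ρ j).character) g * (ρ i).character g⁻¹
    _ = ∑ j, c j * ((Nat.card G : k)⁻¹ * ∑ g, (ρ j).character g * (ρ i).character g⁻¹) := by
      simp only [Finset.sum_apply, Pi.smul_apply, smul_eq_mul, Finset.sum_mul, Finset.mul_sum]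
      rw [Finset.sum_comm]
      simp only [mul_left_comm, mul_assoc]
    _ = c i := by
      simp only [hρ.card_inv_mul_sum_character_mul_character_inv, mul_ite, mul_one, mul_zero,
        Finset.sum_ite_eq', Finset.mem_univ, if_true]

theorem sum_finrank_mul_character [Finite G] (hρ : IsIrrepSystem ρ) (g : G) :
    ∑ i, (finrank k (W i) : k) * (ρ i).character g =
      if g = 1 then (Nat.card G : k) else 0 := by
  have := Fintype.ofFinite G
  have pairing_leftRegular (i : ι) :
      (Nat.card G : k)⁻¹ * ∑ h, (leftRegular k G).character h * (ρ i).character h⁻¹ =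
        finrank k (W i) := by
    simp only [character_leftRegular, ite_mul, zero_mul, Finset.sum_ite_eq', Finset.mem_univ,
      if_true, inv_one, char_one, inv_mul_cancel_left₀ (NeZero.ne (Nat.card G : k))]
  rw [← character_leftRegular,
    hρ.eq_sum_smul_character_of_mem_span hρ.character_leftRegular_mem_span]
  simp only [pairing_leftRegular, Finset.sum_apply, Pi.smul_apply, smul_eq_mul]

theorem card_mul_sum_prod_finrank_mul_finrank_invariants [Finite G] (hρ : IsIrrepSystem ρ)
    (κ : Type*) [Fintype κ] [DecidableEq κ] [Nonempty κ] :
    (Nat.card G : k) * ∑ R : κ → ι, (∏ i, (finrank k (W (R i)) : k)) *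
        finrank k (diagonalTensor fun i ↦ ρ (R i)).invariants =
      (Nat.card G : k) ^ Fintype.card κ := by
  have := Fintype.ofFinite G
  have := invertibleOfNonzero (NeZero.ne (Nat.card G : k))
  have card_mul_finrank_invariants (R : κ → ι) :
      (Nat.card G : k) * finrank k (diagonalTensor fun i ↦ ρ (R i)).invariants =
        ∑ g, ∏ i, (ρ (R i)).character g := by
    simp only [← card_inv_mul_sum_char_eq_finrank, character_diagonalTensor,
      mul_inv_cancel_left₀ (NeZero.ne (Nat.card G : k))]
  calc (Nat.card G : k) * ∑ R : κ → ι, (∏ i, (finrank k (W (R i)) : k)) *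
        finrank k (diagonalTensor fun i ↦ ρ (R i)).invariants
    _ = ∑ R : κ → ι, ∑ g, ∏ i, (finrank k (W (R i)) : k) * (ρ (R i)).character g := by
      simp only [Finset.mul_sum, mul_left_comm (Nat.card G : k), card_mul_finrank_invariants,
        Finset.prod_mul_distrib]
    _ = ∑ g, ∏ _i : κ, ∑ j, (finrank k (W j) : k) * (ρ j).character g := by
      rw [Finset.sum_comm]
      simp only [Fintype.prod_sum]
    _ = (Nat.card G : k) ^ Fintype.card κ := by
      simp [hρ.sum_finrank_mul_character]

end IsIrrepSystem

end IrrepSystem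

theorem sum_dim_mul_invariants_eq_card_pow_general {k G ι κ : Type*} [Field k] [IsAlgClosed k]
    [CharZero k] [Group G] [Finite G] [Fintype ι] [Fintype κ] [DecidableEq κ] [Nonempty κ]
    {W : ι → Type*} [∀ i, AddCommGroup (W i)] [∀ i, Module k (W i)]
    [∀ i, FiniteDimensional k (W i)] {ρ : ∀ i, Representation k G (W i)}
    (hρ : IsIrrepSystem ρ) :
    ∑ R : κ → ι, (∏ i, finrank k (W (R i))) *
        finrank k (diagonalTensor fun i ↦ ρ (R i)).invariants =
      Nat.card G ^ (Fintype.card κ - 1) := by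
  refine Nat.eq_of_mul_eq_mul_left (Nat.card_pos (α := G)) ?_
  rw [mul_pow_sub_one Fintype.card_ne_zero]
  exact_mod_cast hρ.card_mul_sum_prod_finrank_mul_finrank_invariants κ

section Translation

variable {G W U : Type} [Group G] [AddCommGroup W] [Module ℂ W] [AddCommGroup U] [Module ℂ U]
  {ρ : Representation ℂ G W} {σ : Representation ℂ G U}

theorem isIrred_iff_isIrreducible : IsIrred ρ ↔ ρ.IsIrreducible := by
  constructor
  · rintro ⟨_, eq_bot_or_eq_top⟩
    refine { exists_pair_ne := ⟨⊥, ⊤, fun h ↦ ?_⟩, eq_bot_or_eq_top := fun τ ↦ ?_ }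
    · exact bot_ne_top (congrArg Subrepresentation.toSubmodule h)
    · exact (eq_bot_or_eq_top τ.toSubmodule fun g x hx ↦ τ.apply_mem_toSubmodule g hx).imp
        (fun h ↦ Subrepresentation.toSubmodule_injective h)
        (fun h ↦ Subrepresentation.toSubmodule_injective h)
  · intro hρ
    refine ⟨not_subsingleton_iff_nontrivial.mp fun _ ↦ bot_ne_top
      (α := Subrepresentation ρ) (Subrepresentation.toSubmodule_injective (Subsingleton.elim _ _)),
      fun p hp ↦ ?_⟩
    exact (hρ.eq_bot_or_eq_top ⟨p, fun g x hx ↦ hp g x hx⟩).imp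
      (congrArg Subrepresentation.toSubmodule) (congrArg Subrepresentation.toSubmodule)

theorem repIso_iff_nonempty_equiv : RepIso ρ σ ↔ Nonempty (ρ.Equiv σ) :=
  ⟨fun ⟨e, he⟩ ↦ ⟨.mk e fun g ↦ LinearMap.ext (he g)⟩,
    fun ⟨e⟩ ↦ ⟨e.toLinearEquiv, e.toIntertwiningMap.isIntertwining⟩⟩

end Translation

theorem CompleteIrrepFamily.isIrrepSystem {G ι : Type} [Group G] [Finite G] {W : ι → Type}
    [∀ i, AddCommGroup (W i)] [∀ i, Module ℂ (W i)] {ρ : ∀ i, Representation ℂ G (W i)}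
    (hfam : CompleteIrrepFamily G ι W ρ) : IsIrrepSystem ρ where
  irreducible i := isIrred_iff_isIrreducible.mp (hfam.irred i)
  eq_of_equiv i j e :=
    not_imp_comm.mp (hfam.nonIso i j) (not_not_intro (repIso_iff_nonempty_equiv.mpr ⟨e⟩))
  exists_equiv τ hτ :=
    (hfam.complete τ.toSubmodule τ.toRepresentation (isIrred_iff_isIrreducible.mpr hτ)).imp
      fun _ ↦ repIso_iff_nonempty_equiv.mp

/-- **Counting identity (eq. (49) of the paper).**  Let `Ĝ = {Wᵢ}` be a complete
family of irreducible complex representations of the finite group `G`, let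
`d_R = dim R`, and for an `L`-tuple `R⃗` of irreps let `N_{R⃗}` be the
multiplicity of the trivial representation in `R₁ ⊗ ⋯ ⊗ R_L` under the
diagonal action and `d_{R⃗} = ∏ᵢ d_{Rᵢ}`.  Then for every `L ≥ 1`,
`∑_{R⃗ ∈ Ĝ^L} d_{R⃗} N_{R⃗} = |G|^{L−1}`. -/
theorem sum_dim_mul_invariants_eq_card_pow
    (G : Type) [Group G] [Fintype G] (ι : Type) [Fintype ι] (W : ι → Type)
    [∀ i, AddCommGroup (W i)] [∀ i, Module ℂ (W i)]
    (ρ : ∀ i, Representation ℂ G (W i))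
    (hfam : CompleteIrrepFamily G ι W ρ)
    (Lc : ℕ) (hLc : 1 ≤ Lc) :
    ∑ R : Fin Lc → ι, (∏ k, Module.finrank ℂ (W (R k))) * Ninv ρ R =
      Fintype.card G ^ (Lc - 1) := by
  have := hfam.finiteDim
  have : Nonempty (Fin Lc) := ⟨⟨0, hLc⟩⟩
  simpa [Ninv] using! sum_dim_mul_invariants_eq_card_pow_general (κ := Fin Lc) hfam.isIrrepSystem

end QDM
end
end
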